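/- Let G = (V,E) be a DAMG, R a commutative ring, q : E → R a normalized weight function with total path weight function s, and z ∈ V. Let s^{∖z} be the total path weight function of the projected weighted DAMG (G^{∖z}, q^{∖z}). Then s^{∖z}(x|y) = s(x|y) for all x, y ∈ V∖{z}. -/

import Mathlib

open scoped Classical

/-- A directed multigraph: finite sets of vertices/edges with tail and head maps. -/
structure MGraph (V E : Type*) where
  tl : E → V
  hd : E → V

namespace MGraph

variable {V E R A : Type*}

/-- `G` is a directed acyclic multigraph (DAMG) if it admits a topological ordering,
i.e. a linear (injective) order on the vertices such that tails precede heads. -/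
def IsDAMG (G : MGraph V E) : Prop :=
  ∃ ord : V → ℕ, Function.Injective ord ∧ ∀ e : E, ord (G.tl e) < ord (G.hd e)

/-- `G.IsPath x y l` : the list of edges `l` is a directed path from `x` to `y`. -/
def IsPath (G : MGraph V E) : V → V → List E → Prop
  | x, y, [] => x = y
  | x, y, e :: es => G.tl e = x ∧ G.IsPath (G.hd e) y es

/-- the set `E(x,y)` of edges from `x` to `y` -/
def edges (G : MGraph V E) (x y : V) : Set E := {e | G.tl e = x ∧ G.hd e = y}

/-- there is a directed path from `x` to `y` (possibly trivial) -/
def Reaches (G : MGraph V E) (x y : V) : Prop := ∃ l : List E, G.IsPath x y l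

/-- ancestors of `y` (including `y`) -/
def anc (G : MGraph V E) (y : V) : Set V := {x | G.Reaches x y}

/-- descendants of `x` (including `x`) -/
def desc (G : MGraph V E) (x : V) : Set V := {y | G.Reaches x y}

/-- parents of `y` -/
def pa (G : MGraph V E) (y : V) : Set V := {x | ∃ e : E, G.tl e = x ∧ G.hd e = y}

/-- roots (sources) of `G` -/
def roots (G : MGraph V E) : Set V := {x | G.pa x = ∅}

/-- leaves (sinks) of `G` -/
def leaves (G : MGraph V E) : Set V := {x | ∀ e : E, G.tl e ≠ x}

/-- `π(x,y)` : the number of directed paths from `x` to `y` -/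
noncomputable def nPaths (G : MGraph V E) (x y : V) : ℕ :=
  {l : List E | G.IsPath x y l}.ncard

/-- `π(y)` : the number of directed paths from roots to `y` -/
noncomputable def nPathsRt (G : MGraph V E) (y : V) : ℕ :=
  ∑ᶠ r ∈ G.roots, G.nPaths r y

/-- pairwise weight `q(x|y) := Σ_{e ∈ E(x,y)} q(e)` -/
noncomputable def pw [AddCommMonoid R] (G : MGraph V E) (q : E → R) (x y : V) : R :=
  ∑ᶠ e ∈ G.edges x y, q e

/-- a weight function is normalized if pairwise weights into any non-root sum to 1 -/
def Normalized [CommRing R] (G : MGraph V E) (q : E → R) : Prop :=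
  ∀ y : V, y ∉ G.roots → (∑ᶠ x : V, G.pw q x y) = 1

/-- `w` is the Möbius transform (synergy function) of `v` w.r.t. `G` -/
def IsMoebiusTransform [AddCommGroup A] (G : MGraph V E) (v w : V → A) : Prop :=
  ∀ x : V, w x = v x - ∑ᶠ y ∈ G.anc x \ {x}, w y

/-- `μ` is the Möbius function of `G` -/
def IsMoebiusFunction (G : MGraph V E) (μ : V → V → ℤ) : Prop :=
  (∀ x y : V, x ∉ G.anc y → μ x y = 0) ∧
  (∀ x : V, μ x x = 1) ∧
  (∀ x y : V, x ∈ G.anc y → x ≠ y →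
    μ x y = -(∑ᶠ z ∈ (G.desc x ∩ G.anc y) \ {y}, μ x z))

/-- `s` is the total path weight function of the edge weight function `q` -/
def IsTotalWeight [CommRing R] (G : MGraph V E) (q : E → R) (s : V → V → R) : Prop :=
  (∀ x y : V, y ∉ G.desc x → s x y = 0) ∧
  (∀ x : V, s x x = 1) ∧
  (∀ x y : V, y ∈ G.desc x → y ≠ x → s x y = ∑ᶠ z ∈ G.pa y, s x z * G.pw q z y)

/-- `τ : V → R` is the extension of a root weight function via the recursion
`τ(y) = Σ_{z ∈ Pa(y)} τ(z)·ς(z,y)` for non-roots `y` -/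
def IsRootExtension [CommRing R] (G : MGraph V E) (ς : E → R) (τ : V → R) : Prop :=
  ∀ y : V, y ∉ G.roots → τ y = ∑ᶠ z ∈ G.pa y, τ z * G.pw ς z y

/-- the list of vertices visited by a path starting at `x` -/
def pathVerts (G : MGraph V E) (x : V) (l : List E) : List V := x :: l.map G.hd

/-- `X` is a horizontal subset of `G` : every directed path from a root to a leaf
contains exactly one element of `X` -/
def Horizontal (G : MGraph V E) (X : Set V) : Prop :=
  ∀ r ∈ G.roots, ∀ lf ∈ G.leaves, ∀ p : List E, G.IsPath r lf p →
    (G.pathVerts r p).countP (fun v => decide (v ∈ X)) = 1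

/-- the path uniform weight function `q_G(e) := π(t(e))/π(h(e))` -/
noncomputable def pathUniform (G : MGraph V E) : E → ℚ :=
  fun e => (G.nPathsRt (G.tl e) : ℚ) / (G.nPathsRt (G.hd e) : ℚ)

/-- the unanimity value function centred at `y` -/
noncomputable def zeta [CommRing R] (G : MGraph V E) (y : V) : V → R :=
  fun x => if x ∈ G.desc y then (1 : R) else 0

/-! ### Projection onto the complement of a single element -/

/-- the edge type of the projection `G^{∖z}` :
old edges avoiding `z`, together with a new edge for every pair of edges through `z` -/
def proj1E (G : MGraph V E) (z : V) : Type _ :=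
  {e : E // G.tl e ≠ z ∧ G.hd e ≠ z} ⊕
  {p : E × E // G.hd p.1 = z ∧ G.tl p.2 = z ∧ G.tl p.1 ≠ z ∧ G.hd p.2 ≠ z}

/-- the projection `G^{∖z}` of `G` onto the complement of `z` -/
def proj1 (G : MGraph V E) (z : V) : MGraph {x : V // x ≠ z} (G.proj1E z) where
  tl := Sum.elim (fun e => ⟨G.tl e.1, e.2.1⟩) (fun p => ⟨G.tl p.1.1, p.2.2.2.1⟩)
  hd := Sum.elim (fun e => ⟨G.hd e.1, e.2.2⟩) (fun p => ⟨G.hd p.1.2, p.2.2.2.2⟩)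

/-- the projected weight function `q^{∖z}` -/
def proj1Q [CommRing R] (G : MGraph V E) (z : V) (q : E → R) : G.proj1E z → R :=
  Sum.elim (fun e => q e.1) (fun p => q p.1.1 * q p.1.2)

/-- the single-element projection `w^{∖z}(x) := w(x) + q(x|z)·w(z)` of a synergy function -/
noncomputable def wProjOne [CommRing R] [AddCommGroup A] [Module R A]
    (G : MGraph V E) (q : E → R) (w : V → A) (z : V) : {x : V // x ≠ z} → A :=
  fun x => w x.1 + G.pw q x.1 z • w z

/-! ### Projection onto the complement of a subset -/

/-- consecutive edges of the list compose -/
def IsChain (G : MGraph V E) : List E → Prop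
  | [] => True
  | [_] => True
  | e :: e' :: es => G.hd e = G.tl e' ∧ G.IsChain (e' :: es)

/-- the interior vertices of a path (all visited vertices except the endpoints) -/
def interior (G : MGraph V E) : List E → List V
  | [] => []
  | [_] => []
  | e :: e' :: es => G.hd e :: G.interior (e' :: es)

/-- an edge of the projection `G^{∖S}` : a nonempty directed path of `G` whose
interior vertices lie in `S` and whose endpoints lie outside `S`
(iterating `E^{∖z}(x,y) := E(x,y) ⊔ (E(x,z) × E(z,y))` over the elements of `S`) -/
structure ProjEdge (G : MGraph V E) (S : Set V) where
  first : E
  rest : List E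
  chain : G.IsChain (first :: rest)
  tl_notin : G.tl first ∉ S
  hd_notin : G.hd ((first :: rest).getLast (List.cons_ne_nil _ _)) ∉ S
  interior_mem : ∀ v ∈ G.interior (first :: rest), v ∈ S

/-- the projection `G^{∖S}` of `G` onto the complement of the subset `S` -/
def projG (G : MGraph V E) (S : Set V) : MGraph {x : V // x ∉ S} (G.ProjEdge S) where
  tl := fun p => ⟨G.tl p.first, p.tl_notin⟩
  hd := fun p => ⟨G.hd ((p.first :: p.rest).getLast (List.cons_ne_nil _ _)), p.hd_notin⟩

/-- the projected weight function `q^{∖S}` (weights multiply along collapsed paths) -/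
def projQ [CommRing R] (G : MGraph V E) (S : Set V) (q : E → R) :
    G.ProjEdge S → R :=
  fun p => ((p.first :: p.rest).map q).prod

/-! ### Iterated one-element projections of pairwise weights and synergy functions -/

/-- one projection step on pairwise weights: `q^{∖z}(x|y) = q(x|y) + q(x|z)·q(z|y)` -/
def pwStep [CommRing R] (Q : V → V → R) (z : V) : V → V → R :=
  fun x y => Q x y + Q x z * Q z y

/-- one projection step on a synergy function: `w^{∖z}(x) = w(x) + q(x|z)·w(z)` -/
def wStep [CommRing R] [AddCommGroup A] [Module R A]
    (Q : V → V → R) (w : V → A) (z : V) : V → A :=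
  fun x => w x + Q x z • w z

/-- iterated one-element projections along a list of vertices -/
def projIter [CommRing R] [AddCommGroup A] [Module R A] :
    List V → (V → V → R) → (V → A) → ((V → V → R) × (V → A))
  | [], Q, w => (Q, w)
  | z :: zs, Q, w => projIter zs (pwStep Q z) (wStep Q w z)

/-! ### Subgraph on a subset of vertices -/

/-- edges of `G` with both endpoints in `S` -/
def subE (G : MGraph V E) (S : Set V) : Type _ := {e : E // G.tl e ∈ S ∧ G.hd e ∈ S}

/-- the subgraph of `G` on the vertex subset `S` -/
def subgraph (G : MGraph V E) (S : Set V) : MGraph ↥S (G.subE S) where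
  tl := fun e => ⟨G.tl e.1, e.2.1⟩
  hd := fun e => ⟨G.hd e.1, e.2.2⟩

/-- the canonical identification `(V∖{z})∖{u} ≃ (V∖{u})∖{z}` -/
def swapCompl (z u : V) (hzu : z ≠ u) :
    {y : {x : V // x ≠ z} // y ≠ ⟨u, Ne.symm hzu⟩} ≃
      {y : {x : V // x ≠ u} // y ≠ ⟨z, hzu⟩} where
  toFun y := ⟨⟨y.1.1, fun h => y.2 (Subtype.ext h)⟩, fun h => y.1.2 (congrArg Subtype.val h)⟩
  invFun y := ⟨⟨y.1.1, fun h => y.2 (Subtype.ext h)⟩, fun h => y.1.2 (congrArg Subtype.val h)⟩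
  left_inv y := rfl
  right_inv y := rfl

end MGraph

/-! Acyclicity makes `f = c + f·Q`, with `Q` the matrix of pairwise weights, uniquely solvable for
`f` along the parent relation, and row `x` of the total path weights is the solution whose source
`c` is the unit mass at `x`. Since `Q z z = 0`, a source vanishing at `z` gives
`f z = ∑_{u ≠ z} f u * Q u z`. Substituting this into the equations at the other vertices eliminates
`f z` and replaces `Q u y` by `Q u y + Q u z * Q z y`, the pairwise weight of the projection. -/

theorem finsum_eq_add_finsum_ne {ι M : Type*} [AddCommMonoid M] {f : ι → M} (hf : f.support.Finite)
    (a : ι) : ∑ᶠ i, f i = f a + ∑ᶠ i : {i // i ≠ a}, f i := by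
  rw [finsum_subtype_eq_finsum_cond, add_finsum_cond_ne a hf]

theorem finsum_mem_prod_mul {ι κ R : Type*} [NonUnitalNonAssocSemiring R] {s : Set ι} {t : Set κ}
    {f : ι → R} {g : κ → R} (hf : (s ∩ f.support).Finite) (hg : (t ∩ g.support).Finite) :
    ∑ᶠ p ∈ s ×ˢ t, f p.1 * g p.2 = (∑ᶠ i ∈ s, f i) * ∑ᶠ j ∈ t, g j := by
  rw [finsum_mem_eq_sum f hf, finsum_mem_eq_sum g hg, Finset.sum_mul_sum, ← Finset.sum_product']
  apply finsum_mem_eq_sum_of_inter_support_eq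
  ext ⟨i, j⟩
  have nonzero_factors (h : f i * g j ≠ 0) : f i ≠ 0 ∧ g j ≠ 0 :=
    ⟨left_ne_zero_of_mul h, right_ne_zero_of_mul h⟩
  simp only [Set.mem_inter_iff, Set.mem_prod, Function.mem_support, Finset.coe_product,
    Set.Finite.coe_toFinset]
  tauto

theorem finsum_mem_sum_type {ι κ M : Type*} [AddCommMonoid M] {s : Set (ι ⊕ κ)} {f : ι ⊕ κ → M}
    (hs : (s ∩ f.support).Finite) :
    ∑ᶠ e ∈ s, f e = ∑ᶠ i ∈ Sum.inl ⁻¹' s, f (.inl i) + ∑ᶠ j ∈ Sum.inr ⁻¹' s, f (.inr j) := by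
  have finite_of_subset (t : Set (ι ⊕ κ)) (ht : t ⊆ s) : (t ∩ f.support).Finite :=
    hs.subset (Set.inter_subset_inter_left _ ht)
  rw [← finsum_mem_image Sum.inl_injective.injOn, ← finsum_mem_image Sum.inr_injective.injOn,
    ← finsum_mem_union' Set.disjoint_image_inl_image_inr
      (finite_of_subset _ (Set.image_preimage_subset _ _))
      (finite_of_subset _ (Set.image_preimage_subset _ _)),
    Set.image_preimage_inl_union_image_preimage_inr]

namespace MGraph

section Reachability

variable {V E : Type*} {G : MGraph V E}

theorem reaches_iff_reflTransGen {x y : V} :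
    G.Reaches x y ↔ Relation.ReflTransGen (· ∈ G.pa ·) x y := by
  constructor
  · rintro ⟨l, hl⟩
    induction l generalizing x with
    | nil => exact hl ▸ .refl
    | cons e l ih => exact .head ⟨e, hl.1, rfl⟩ (ih hl.2)
  · intro h
    induction h using Relation.ReflTransGen.head_induction_on with
    | refl => exact ⟨[], rfl⟩
    | head huv _ ih =>
      obtain ⟨e, rfl, rfl⟩ := huv
      obtain ⟨l, hl⟩ := ih
      exact ⟨e :: l, rfl, hl⟩

theorem mem_desc_of_mem_pa {x u y : V} (hu : u ∈ G.desc x) (huy : u ∈ G.pa y) : y ∈ G.desc x :=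
  reaches_iff_reflTransGen.2 ((reaches_iff_reflTransGen.1 hu).tail huy)

theorem notMem_desc_of_mem_pa (hG : WellFounded (· ∈ G.pa ·)) {x u : V} (hu : u ∈ G.pa x) :
    u ∉ G.desc x := fun hxu =>
  have : IsWellFounded V (Relation.TransGen (· ∈ G.pa ·)) := ⟨hG.transGen⟩
  irrefl x (Relation.TransGen.tail' (reaches_iff_reflTransGen.1 hxu) hu)

theorem notMem_pa_self (hG : WellFounded (· ∈ G.pa ·)) (x : V) : x ∉ G.pa x := fun hx =>
  notMem_desc_of_mem_pa hG hx ⟨[], rfl⟩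

theorem IsDAMG.wellFounded_pa (hG : G.IsDAMG) : WellFounded (· ∈ G.pa ·) := by
  obtain ⟨ord, -, ord_lt⟩ := hG
  refine Subrelation.wf ?_ (measure ord).wf
  rintro _ _ ⟨e, rfl, rfl⟩
  exact ord_lt e

theorem transGen_pa_of_mem_pa_proj1 {z : V} {u y : {x : V // x ≠ z}} (h : u ∈ (G.proj1 z).pa y) :
    Relation.TransGen (· ∈ G.pa ·) u.1 y.1 := by
  obtain ⟨e | ⟨⟨e, e'⟩, he, he', _⟩, rfl, rfl⟩ := h
  · exact .single ⟨e, rfl, rfl⟩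
  · exact .tail (.single ⟨e, rfl, he⟩) ⟨e', he', rfl⟩

theorem wellFounded_pa_proj1 (hG : WellFounded (· ∈ G.pa ·)) (z : V) :
    WellFounded (· ∈ (G.proj1 z).pa ·) :=
  Subrelation.wf transGen_pa_of_mem_pa_proj1 (InvImage.wf Subtype.val hG.transGen)

end Reachability

section ProjectedEdges

variable {V E : Type*}

/-- An edge of the projection `G^{∖z}` inherited from `G`: the left summand of `proj1E`. -/
abbrev OldEdge (G : MGraph V E) (z : V) : Type _ :=
  {e : E // G.tl e ≠ z ∧ G.hd e ≠ z}

/-- An edge of the projection `G^{∖z}` composed of two edges of `G` through `z`: the right summand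
of `proj1E`. -/
abbrev NewEdge (G : MGraph V E) (z : V) : Type _ :=
  {p : E × E // G.hd p.1 = z ∧ G.tl p.2 = z ∧ G.tl p.1 ≠ z ∧ G.hd p.2 ≠ z}

theorem bijOn_oldEdge (G : MGraph V E) {z : V} (x y : {x : V // x ≠ z}) :
    Set.BijOn Subtype.val {e : G.OldEdge z | Sum.inl e ∈ (G.proj1 z).edges x y}
      (G.edges x.1 y.1) := by
  refine ⟨fun e he => ⟨congrArg Subtype.val he.1, congrArg Subtype.val he.2⟩,
    Subtype.val_injective.injOn, ?_⟩
  rintro e ⟨htl, hhd⟩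
  exact ⟨⟨e, htl ▸ x.2, hhd ▸ y.2⟩, ⟨Subtype.ext htl, Subtype.ext hhd⟩, rfl⟩

theorem bijOn_newEdge (G : MGraph V E) {z : V} (x y : {x : V // x ≠ z}) :
    Set.BijOn Subtype.val {p : G.NewEdge z | Sum.inr p ∈ (G.proj1 z).edges x y}
      (G.edges x.1 z ×ˢ G.edges z y.1) := by
  refine ⟨fun p hp => ⟨⟨congrArg Subtype.val hp.1, p.2.1⟩, p.2.2.1, congrArg Subtype.val hp.2⟩,
    Subtype.val_injective.injOn, ?_⟩
  rintro ⟨e, e'⟩ ⟨⟨htl, hhd⟩, htl', hhd'⟩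
  exact ⟨⟨(e, e'), hhd, htl', htl ▸ x.2, hhd' ▸ y.2⟩, ⟨Subtype.ext htl, Subtype.ext hhd'⟩, rfl⟩

end ProjectedEdges

section PairwiseWeight

theorem pw_eq_zero_of_notMem_pa {V E R : Type*} [AddCommMonoid R] {G : MGraph V E} (q : E → R)
    {x y : V} (h : x ∉ G.pa y) : G.pw q x y = 0 :=
  finsum_mem_of_eqOn_zero fun e he => (h ⟨e, he⟩).elim

/-- Finitely many edges into each vertex carry a nonzero weight; in particular the matrix of
pairwise weights is column-finite. This makes the `finsum`s defining pairwise and total path weights genuine sums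
on infinite graphs; constraining `q` rather than `G` still allows infinitely many null edges. -/
def IsColumnFinite {V E R : Type*} [Zero R] (G : MGraph V E) (q : E → R) : Prop :=
  ∀ y : V, (G.hd ⁻¹' {y} ∩ q.support).Finite

variable {V E R : Type*} {G : MGraph V E} {q : E → R}

theorem IsColumnFinite.finite_edges_inter_support [Zero R] (hq : G.IsColumnFinite q) (x y : V) :
    (G.edges x y ∩ q.support).Finite :=
  (hq y).subset fun _ he => ⟨he.1.2, he.2⟩

theorem IsColumnFinite.finite_support_pw [AddCommMonoid R] (hq : G.IsColumnFinite q) (y : V) :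
    (Function.support fun u => G.pw q u y).Finite := by
  refine ((hq y).image G.tl).subset fun u hu => ?_
  obtain ⟨e, ⟨htl, hhd⟩, he⟩ := exists_ne_zero_of_finsum_mem_ne_zero hu
  exact ⟨e, ⟨hhd, he⟩, htl⟩

variable [CommRing R]

theorem IsColumnFinite.proj1 (hq : G.IsColumnFinite q) (z : V) :
    (G.proj1 z).IsColumnFinite (G.proj1Q z q) := by
  intro y
  have finite_old := (hq y.1).preimage (f := (Subtype.val : G.OldEdge z → E))
    Subtype.val_injective.injOn
  have finite_new := ((hq z).prod (hq y.1)).preimage (f := (Subtype.val : G.NewEdge z → E × E))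
    Subtype.val_injective.injOn
  refine ((finite_old.image Sum.inl).union (finite_new.image Sum.inr)).subset ?_
  rintro (e | p) ⟨hhd, hne⟩
  · exact .inl ⟨e, ⟨congrArg Subtype.val hhd, hne⟩, rfl⟩
  · exact .inr ⟨p, ⟨⟨p.2.1, left_ne_zero_of_mul hne⟩,
      ⟨congrArg Subtype.val hhd, right_ne_zero_of_mul hne⟩⟩, rfl⟩

theorem pw_proj1 (hq : G.IsColumnFinite q) {z : V} (x y : {x : V // x ≠ z}) :
    (G.proj1 z).pw (G.proj1Q z q) x y = G.pw q x.1 y.1 + G.pw q x.1 z * G.pw q z y.1 := by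
  have sum_old : ∑ᶠ e ∈ {e : G.OldEdge z | Sum.inl e ∈ (G.proj1 z).edges x y}, q e.1 =
      G.pw q x.1 y.1 :=
    finsum_mem_eq_of_bijOn _ (G.bijOn_oldEdge x y) fun _ _ => rfl
  have sum_new : ∑ᶠ p ∈ {p : G.NewEdge z | Sum.inr p ∈ (G.proj1 z).edges x y},
      q p.1.1 * q p.1.2 = G.pw q x.1 z * G.pw q z y.1 :=
    (finsum_mem_eq_of_bijOn (g := fun p => q p.1 * q p.2) _ (G.bijOn_newEdge x y)
      fun _ _ => rfl).trans <|
    finsum_mem_prod_mul (hq.finite_edges_inter_support x.1 z)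
      (hq.finite_edges_inter_support z y.1)
  exact (finsum_mem_sum_type ((hq.proj1 z).finite_edges_inter_support x y)).trans
    (congrArg₂ (· + ·) sum_old sum_new)

end PairwiseWeight

section Propagation

variable {V E R : Type*} [CommRing R] {G : MGraph V E} {q : E → R} {c f g : V → R}

/-- `f` is obtained by propagating the source `c` along the edges of `G` with weights `q`, i.e. the
row vector `f` satisfies `f = c + f·Q` for the matrix `Q` of pairwise weights. -/
def IsPropagation (G : MGraph V E) (q : E → R) (c f : V → R) : Prop :=
  ∀ y : V, f y = c y + ∑ᶠ u, f u * G.pw q u y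

theorem IsPropagation.unique (hG : WellFounded (· ∈ G.pa ·)) (hf : G.IsPropagation q c f)
    (hg : G.IsPropagation q c g) : f = g := by
  funext y
  induction y using hG.induction with
  | _ y ih =>
    rw [hf y, hg y]
    congr 1
    refine finsum_congr fun u => ?_
    by_cases hu : u ∈ G.pa y
    · rw [ih u hu]
    · rw [pw_eq_zero_of_notMem_pa q hu, mul_zero, mul_zero]

theorem finsum_mem_pa_mul_pw (G : MGraph V E) (q : E → R) (f : V → R) (y : V) :
    ∑ᶠ u ∈ G.pa y, f u * G.pw q u y = ∑ᶠ u, f u * G.pw q u y := by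
  rw [finsum_mem_def, Set.indicator_eq_self.2]
  refine fun u hu => by_contra fun hpa => hu ?_
  change f u * G.pw q u y = 0
  rw [pw_eq_zero_of_notMem_pa q hpa, mul_zero]

theorem IsTotalWeight.isPropagation [DecidableEq V] {s : V → V → R} (hs : G.IsTotalWeight q s)
    (hG : WellFounded (· ∈ G.pa ·)) (x : V) : G.IsPropagation q (Pi.single x 1) (s x) := by
  obtain ⟨eq_zero, self_eq_one, step⟩ := hs
  intro y
  rw [← finsum_mem_pa_mul_pw]
  have no_inflow (h : ∀ u ∈ G.pa y, u ∉ G.desc x) : ∑ᶠ u ∈ G.pa y, s x u * G.pw q u y = 0 :=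
    finsum_mem_of_eqOn_zero fun u hu => by simp only [eq_zero x u (h u hu), zero_mul, Pi.zero_apply]
  rcases eq_or_ne y x with rfl | hyx
  · rw [self_eq_one, Pi.single_eq_same, no_inflow fun u => notMem_desc_of_mem_pa hG, add_zero]
  rw [Pi.single_eq_of_ne hyx, zero_add]
  by_cases hy : y ∈ G.desc x
  · exact step x y hy hyx
  · rw [eq_zero x y hy, no_inflow fun u hu hxu => hy (mem_desc_of_mem_pa hxu hu)]

theorem IsPropagation.proj1 (hf : G.IsPropagation q c f) (hq : G.IsColumnFinite q) {z : V}
    (hc : c z = 0) (hz : G.pw q z z = 0) :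
    (G.proj1 z).IsPropagation (G.proj1Q z q) (fun y => c y.1) (fun y => f y.1) := by
  have finite_inflow (y : V) : (Function.support fun u => f u * G.pw q u y).Finite :=
    (hq.finite_support_pw y).subset (Function.support_mul_subset_right _ _)
  have finite_restrict (y : V) :
      (Function.support fun u : {u // u ≠ z} => f u.1 * G.pw q u.1 y).Finite :=
    (finite_inflow y).preimage Subtype.val_injective.injOn
  have at_z : f z = ∑ᶠ u : {u // u ≠ z}, f u.1 * G.pw q u.1 z := by
    conv_lhs => rw [hf z, finsum_eq_add_finsum_ne (finite_inflow z) z, hc, hz]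
    rw [mul_zero, zero_add, zero_add]
  intro y
  calc f y.1
      = c y.1 + (f z * G.pw q z y.1 + ∑ᶠ u : {u // u ≠ z}, f u.1 * G.pw q u.1 y.1) := by
        rw [hf y.1, finsum_eq_add_finsum_ne (finite_inflow y.1) z]
    _ = c y.1 + (∑ᶠ u : {u // u ≠ z}, f u.1 * G.pw q u.1 z * G.pw q z y.1 +
          ∑ᶠ u : {u // u ≠ z}, f u.1 * G.pw q u.1 y.1) := by
        rw [at_z, finsum_mul' _ _ (finite_restrict z)]
    _ = c y.1 + ∑ᶠ u : {u // u ≠ z}, f u.1 * (G.proj1 z).pw (G.proj1Q z q) u y := by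
        rw [← finsum_add_distrib
          ((finite_restrict z).subset (Function.support_mul_subset_left _ _))
          (finite_restrict y.1)]
        refine congrArg (c y.1 + ·) (finsum_congr fun u => ?_)
        rw [pw_proj1 hq]
        ring

end Propagation

end MGraph

theorem proj1_total_weights_general {V E R : Type*} [CommRing R]
    (G : MGraph V E) (hG : WellFounded (· ∈ G.pa ·))
    (q : E → R) (hq : G.IsColumnFinite q)
    (s : V → V → R) (hs : G.IsTotalWeight q s)
    (z : V) (s' : {x : V // x ≠ z} → {x : V // x ≠ z} → R)
    (hs' : (G.proj1 z).IsTotalWeight (G.proj1Q z q) s') :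
    ∀ x y : {x : V // x ≠ z}, s' x y = s x.1 y.1 := by
  intro x
  have hG' := MGraph.wellFounded_pa_proj1 hG z
  have source_restrict : (fun y : {x : V // x ≠ z} => (Pi.single x.1 1 : V → R) y.1) =
      Pi.single x 1 := by
    funext y
    simp only [Pi.single_apply, Subtype.ext_iff]
  have restrict := (hs.isPropagation hG x.1).proj1 hq (Pi.single_eq_of_ne x.2.symm 1)
    (MGraph.pw_eq_zero_of_notMem_pa q (MGraph.notMem_pa_self hG z))
  rw [source_restrict] at restrict
  exact congrFun ((hs'.isPropagation hG' x).unique hG' restrict)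

/-- **Total path weight functions are stable under projection.**
If `q` is a normalized weight function on the DAMG `G` with total path weight
function `s`, and `s'` is the total path weight function of the projected
weighted DAMG `(G^{∖z}, q^{∖z})`, then `s'(x|y) = s(x|y)` for all `x, y ∈ V∖{z}`. -/
theorem proj1_total_weights
    {V E R : Type*} [Finite V] [Finite E] [CommRing R]
    (G : MGraph V E) (hG : G.IsDAMG)
    (q : E → R) (hq : G.Normalized q)
    (s : V → V → R) (hs : G.IsTotalWeight q s)
    (z : V) (s' : {x : V // x ≠ z} → {x : V // x ≠ z} → R)
    (hs' : (G.proj1 z).IsTotalWeight (G.proj1Q z q) s') :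
    ∀ x y : {x : V // x ≠ z}, s' x y = s x.1 y.1 :=
  proj1_total_weights_general G hG.wellFounded_pa q (fun _ => Set.toFinite _) s hs z s' hs'
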